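/- Assume Hypothesis (H). Then for every set A ⊆ ℝ × ℝ which does not have the Baire property there exists a Borel measurable function f : ℝ → ℝ such that the set {x ∈ ℝ : (x, f(x)) ∈ A} does not have the Baire property. -/

import Mathlib

open scoped symmDiff

/-- A set has the Baire property if it equals the symmetric difference of an
open set and a meager set. -/
def HasBaireProperty {X : Type*} [TopologicalSpace X] (S : Set X) : Prop :=
  ∃ U M : Set X, IsOpen U ∧ IsMeagre M ∧ S = U ∆ M

/-- A function has the Baire property if the preimage of every open set has
the Baire property. -/
def BaireFunction {X Y : Type*} [TopologicalSpace X] [TopologicalSpace Y] (g : X → Y) : Prop :=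
  ∀ U : Set Y, IsOpen U → HasBaireProperty (g ⁻¹' U)

/-- `F : ℝ × ℝ → ℝ` is Baire sup-measurable if for every `f : ℝ → ℝ` with the Baire
property, the function `x ↦ F (x, f x)` has the Baire property. -/
def BaireSupMeasurable (F : ℝ × ℝ → ℝ) : Prop :=
  ∀ f : ℝ → ℝ, BaireFunction f → BaireFunction (fun x => F (x, f x))

/-- A set `A` is nowhere meager in `X` if `A ∩ U` is nonmeager for every
nonempty open `U ⊆ X`. -/
def NowhereMeager {X : Type*} [TopologicalSpace X] (A : Set X) : Prop :=
  ∀ U : Set X, IsOpen U → U.Nonempty → ¬ IsMeagre (A ∩ U)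

/-- Hypothesis (H): for every `A ⊆ 2^ω × 2^ω` such that both `A` and its complement
are nowhere meager, there is an autohomeomorphism `f` of the Cantor space `2^ω`
such that `{x : (x, f x) ∈ A}` does not have the Baire property. -/
def HypH : Prop :=
  ∀ A : Set ((ℕ → Bool) × (ℕ → Bool)),
    NowhereMeager A → NowhereMeager Aᶜ →
    ∃ f : (ℕ → Bool) ≃ₜ (ℕ → Bool),
      ¬ HasBaireProperty {x : ℕ → Bool | (x, f x) ∈ A}

open Set

/-- `f` is continuous and every nonempty open set is witnessed by an open set downstairs. -/
def IrredMap {X Y : Type*} [TopologicalSpace X] [TopologicalSpace Y] (f : X → Y) : Prop :=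
  Continuous f ∧ ∀ V : Set X, IsOpen V → V.Nonempty →
    ∃ O : Set Y, IsOpen O ∧ O.Nonempty ∧ O ⊆ f '' V ∧ f ⁻¹' O ⊆ V

theorem nowhereDense_of_forall {X : Type*} [TopologicalSpace X] {s : Set X}
    (h : ∀ V : Set X, IsOpen V → V.Nonempty → ∃ O ⊆ V, IsOpen O ∧ O.Nonempty ∧ O ∩ s = ∅) :
    IsNowhereDense s := by
  rw [IsNowhereDense]
  by_contra hne
  obtain ⟨O, hOV, hO, ⟨x, hx⟩, hOs⟩ :=
    h _ isOpen_interior (nonempty_iff_ne_empty.2 hne)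
  have hxc : x ∈ closure s := interior_subset (hOV hx)
  obtain ⟨y, hy⟩ := mem_closure_iff.1 hxc O hO hx
  rw [hOs] at hy
  exact hy

theorem exists_of_nowhereDense {X : Type*} [TopologicalSpace X] {s : Set X}
    (hs : IsNowhereDense s) {V : Set X} (hV : IsOpen V) (hne : V.Nonempty) :
    ∃ O ⊆ V, IsOpen O ∧ O.Nonempty ∧ O ∩ s = ∅ := by
  refine ⟨V \ closure s, sdiff_subset, hV.sdiff isClosed_closure, ?_, ?_⟩
  · by_contra h
    rw [not_nonempty_iff_eq_empty, sdiff_eq_empty] at h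
    have := interior_maximal h hV
    rw [hs] at this
    obtain ⟨x, hx⟩ := hne
    exact this hx
  · ext x
    simp only [mem_inter_iff, mem_sdiff, mem_empty_iff_false, iff_false]
    rintro ⟨⟨_, h⟩, h'⟩
    exact h (subset_closure h')

section Irred
variable {X Y : Type*} [TopologicalSpace X] [TopologicalSpace Y] {f : X → Y}

theorem IrredMap.preimage_nd (hf : IrredMap f) {N : Set Y} (hN : IsNowhereDense N) :
    IsNowhereDense (f ⁻¹' N) := by
  apply nowhereDense_of_forall
  intro V hV hne
  obtain ⟨O, hO, hOne, hOV, hVO⟩ := hf.2 V hV hne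
  obtain ⟨P, hPO, hP, ⟨y, hy⟩, hPN⟩ := exists_of_nowhereDense hN hO hOne
  refine ⟨f ⁻¹' P, (preimage_mono hPO).trans hVO, hP.preimage hf.1, ?_, ?_⟩
  · obtain ⟨x, _, rfl⟩ := hOV (hPO hy)
    exact ⟨x, hy⟩
  · rw [← preimage_inter, hPN, preimage_empty]

theorem IrredMap.image_nd (hf : IrredMap f) {K : Set X} (hK : IsNowhereDense K) :
    IsNowhereDense (f '' K) := by
  apply nowhereDense_of_forall
  intro V hV hne
  by_cases h : (f ⁻¹' V).Nonempty
  · obtain ⟨W, hWV, hW, hWne, hWK⟩ := exists_of_nowhereDense hK (hV.preimage hf.1) h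
    obtain ⟨O, hO, hOne, hOV, hVO⟩ := hf.2 W hW hWne
    refine ⟨O, ?_, hO, hOne, ?_⟩
    · intro y hy
      obtain ⟨x, hx, rfl⟩ := hOV hy
      exact hWV hx
    · rw [eq_empty_iff_forall_notMem]
      rintro _ ⟨hy, x, hx, rfl⟩
      have : x ∈ W ∩ K := ⟨hVO hy, hx⟩
      rw [hWK] at this
      exact this
  · refine ⟨V, Subset.rfl, hV, hne, ?_⟩
    rw [eq_empty_iff_forall_notMem]
    rintro _ ⟨hy, x, hx, rfl⟩
    exact h ⟨x, hy⟩

theorem IrredMap.preimage_meagre (hf : IrredMap f) {N : Set Y} (hN : IsMeagre N) :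
    IsMeagre (f ⁻¹' N) := by
  obtain ⟨S, hS, hc, hsub⟩ := isMeagre_iff_countable_union_isNowhereDense.1 hN
  refine IsMeagre.mono (preimage_mono hsub) ?_
  rw [sUnion_eq_biUnion, preimage_iUnion₂]
  exact isMeagre_biUnion hc fun t ht => (hf.preimage_nd (hS t ht)).isMeagre

theorem IrredMap.image_meagre (hf : IrredMap f) {N : Set X} (hN : IsMeagre N) :
    IsMeagre (f '' N) := by
  obtain ⟨S, hS, hc, hsub⟩ := isMeagre_iff_countable_union_isNowhereDense.1 hN
  refine IsMeagre.mono (image_mono hsub) ?_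
  rw [sUnion_eq_biUnion, image_iUnion₂]
  exact isMeagre_biUnion hc fun t ht => (hf.image_nd (hS t ht)).isMeagre

theorem IrredMap.preimage_baire (hf : IrredMap f) {T : Set Y} (hT : HasBaireProperty T) :
    HasBaireProperty (f ⁻¹' T) := by
  obtain ⟨U, M, hU, hM, rfl⟩ := hT
  exact ⟨f ⁻¹' U, f ⁻¹' M, hU.preimage hf.1, hf.preimage_meagre hM, rfl⟩

theorem IrredMap.prodMap {X' Y' : Type*} [TopologicalSpace X'] [TopologicalSpace Y']
    {g : X' → Y'} (hf : IrredMap f) (hg : IrredMap g) : IrredMap (Prod.map f g) := by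
  refine ⟨hf.1.prodMap hg.1, ?_⟩
  rintro V hV ⟨⟨a, b⟩, hab⟩
  obtain ⟨u, v, hu, hv, hau, hbv, huv⟩ := isOpen_prod_iff.1 hV a b hab
  obtain ⟨O, hO, hOne, hOV, hVO⟩ := hf.2 u hu ⟨a, hau⟩
  obtain ⟨O', hO', hOne', hOV', hVO'⟩ := hg.2 v hv ⟨b, hbv⟩
  refine ⟨O ×ˢ O', hO.prod hO', hOne.prod hOne', ?_, ?_⟩
  · rintro ⟨p, q⟩ ⟨hp, hq⟩
    obtain ⟨x, hx, rfl⟩ := hOV hp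
    obtain ⟨y, hy, rfl⟩ := hOV' hq
    exact ⟨(x, y), huv ⟨hx, hy⟩, rfl⟩
  · rintro ⟨x, y⟩ ⟨hx, hy⟩
    exact huv ⟨hVO hx, hVO' hy⟩

theorem IrredMap.nowhereMeager (hf : IrredMap f) {A W : Set Y} (hr : range f ⊆ W)
    (hA : ∀ V ⊆ W, IsOpen V → V.Nonempty → ¬ IsMeagre (A ∩ V)) :
    NowhereMeager (f ⁻¹' A) := by
  intro V hV hne hM
  obtain ⟨O, hO, hOne, hOV, hVO⟩ := hf.2 V hV hne
  refine hA O ?_ hO hOne ((hf.image_meagre hM).mono ?_)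
  · exact hOV.trans ((image_subset_range _ _).trans hr)
  · rintro y ⟨hyA, hyO⟩
    obtain ⟨x, hx, rfl⟩ := hOV hyO
    exact ⟨x, ⟨hyA, hx⟩, rfl⟩

end Irred

theorem HasBaireProperty.congr_meagre {X : Type*} [TopologicalSpace X] {S T : Set X}
    (hS : HasBaireProperty S) (h : IsMeagre (S ∆ T)) : HasBaireProperty T := by
  obtain ⟨U, M, hU, hM, rfl⟩ := hS
  refine ⟨U, U ∆ T, hU, ?_, (symmDiff_symmDiff_cancel_left U T).symm⟩
  refine (hM.union h).mono ?_
  intro x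
  simp only [mem_symmDiff, mem_union]
  tauto

theorem exists_open_of_not_baire {X : Type*} [TopologicalSpace X] [SecondCountableTopology X]
    {A : Set X} (hA : ¬ HasBaireProperty A) :
    ∃ W : Set X, IsOpen W ∧ W.Nonempty ∧
      (∀ V ⊆ W, IsOpen V → V.Nonempty → ¬ IsMeagre (A ∩ V)) ∧
      (∀ V ⊆ W, IsOpen V → V.Nonempty → ¬ IsMeagre (Aᶜ ∩ V)) := by
  by_contra hcon
  apply hA
  let 𝓑 := TopologicalSpace.countableBasis X
  have hbas := TopologicalSpace.isBasis_countableBasis X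
  have hcount := TopologicalSpace.countable_countableBasis X
  let U : Set X → Set X := fun A => ⋃ B ∈ {B ∈ 𝓑 | IsMeagre (A ∩ B)}, B
  have hUo : ∀ A, IsOpen (U A) := fun A => isOpen_biUnion fun B hB => hbas.isOpen hB.1
  have hUm : ∀ A, IsMeagre (A ∩ U A) := by
    intro A
    rw [inter_iUnion₂]
    exact isMeagre_biUnion (hcount.mono (sep_subset _ _)) fun B hB => hB.2
  have hin : ∀ A V : Set X, IsOpen V → V.Nonempty → IsMeagre (A ∩ V) → (V ∩ U A).Nonempty := by
    rintro A V hV ⟨x, hx⟩ hm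
    obtain ⟨B, hB, hxB, hBV⟩ := hbas.exists_subset_of_mem_open hx hV
    refine ⟨x, hx, mem_iUnion₂.2 ⟨B, ⟨hB, hm.mono (inter_subset_inter_right _ hBV)⟩, hxB⟩⟩
  have hnd : IsNowhereDense (U A ∪ U Aᶜ)ᶜ := by
    apply nowhereDense_of_forall
    intro W hW hne
    have key : (W ∩ (U A ∪ U Aᶜ)).Nonempty := by
      by_contra hemp
      apply hcon
      refine ⟨W, hW, hne, ?_, ?_⟩
      · intro V hVW hV hVne hm
        obtain ⟨x, hx, hx'⟩ := hin _ _ hV hVne hm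
        exact hemp ⟨x, hVW hx, Or.inl hx'⟩
      · intro V hVW hV hVne hm
        obtain ⟨x, hx, hx'⟩ := hin _ _ hV hVne hm
        exact hemp ⟨x, hVW hx, Or.inr hx'⟩
    refine ⟨_, inter_subset_left, hW.inter ((hUo A).union (hUo Aᶜ)), key, ?_⟩
    rw [eq_empty_iff_forall_notMem]
    rintro x ⟨⟨_, h⟩, h'⟩
    exact h' h
  refine ⟨U Aᶜ, U Aᶜ ∆ A, hUo _, ?_, (symmDiff_symmDiff_cancel_left _ A).symm⟩
  refine (((hUm A).union (hUm Aᶜ)).union hnd.isMeagre).mono ?_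
  intro x
  simp only [mem_symmDiff, mem_union, mem_inter_iff, mem_compl_iff]
  tauto

/-- Bool digits to `Fin 2` digits. -/
def bdig (x : ℕ → Bool) : ℕ → Fin 2 := fun n => if x n then 1 else 0

/-- Integer value of the first `n` digits. -/
def pre (x : ℕ → Bool) : ℕ → ℕ
  | 0 => 0
  | n + 1 => 2 * pre x n + (if x n then 1 else 0)

theorem pre_lt (x : ℕ → Bool) (n : ℕ) : pre x n < 2 ^ n := by
  induction n with
  | zero => simp [pre]
  | succ n ih => rw [pre, pow_succ]; split_ifs <;> omega

theorem pre_inj (x y : ℕ → Bool) (n : ℕ) (h : pre x n = pre y n) : ∀ i < n, x i = y i := by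
  induction n with
  | zero => simp
  | succ n ih =>
    rw [pre, pre] at h
    have h1 : pre x n = pre y n := by split_ifs at h <;> omega
    have h2 : x n = y n := by
      rw [h1] at h
      cases hx : x n <;> cases hy : y n <;> simp [hx, hy] at h ⊢
    intro i hi
    rcases Nat.lt_succ_iff_lt_or_eq.1 hi with hi | rfl
    · exact ih h1 i hi
    · exact h2

theorem pre_sum (x : ℕ → Bool) (n : ℕ) :
    (2 : ℝ) ^ n * ∑ i ∈ Finset.range n, Real.ofDigitsTerm (bdig x) i = pre x n := by
  induction n with
  | zero => simp [pre]
  | succ n ih =>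
    rw [Finset.sum_range_succ, mul_add, pow_succ', mul_assoc, ih, pre, Real.ofDigitsTerm, bdig]
    cases x n <;> simp
    all_goals field_simp
    all_goals ring

theorem bphi_bounds (x : ℕ → Bool) (n : ℕ) :
    (pre x n : ℝ) ≤ Real.ofDigits (bdig x) * 2 ^ n ∧
      Real.ofDigits (bdig x) * 2 ^ n ≤ pre x n + 1 := by
  have h := Real.ofDigits_eq_sum_add_ofDigits (bdig x) n
  have h0 := Real.ofDigits_nonneg (fun i => bdig x (i + n))
  have h1 := Real.ofDigits_le_one (fun i => bdig x (i + n))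
  have hs := pre_sum x n
  have : Real.ofDigits (bdig x) * 2 ^ n
      = pre x n + Real.ofDigits (fun i => bdig x (i + n)) := by
    rw [h, ← hs]
    push_cast
    field_simp
  rw [this]
  constructor <;> linarith

theorem continuous_bphi : Continuous fun x : ℕ → Bool => Real.ofDigits (bdig x) := by
  refine Real.continuous_ofDigits.comp (continuous_pi fun n => ?_)
  exact (continuous_of_discreteTopology (f := fun b : Bool => (if b then 1 else 0 : Fin 2))).comp
    (continuous_apply n)

/-- Measurable section. -/
noncomputable def bsec (t : ℝ) : ℕ → Bool :=
  if t < 1 then fun n => decide (Real.digits t 2 n = 1) else fun _ => true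

theorem bsec_meas : Measurable bsec := by
  refine Measurable.ite measurableSet_Iio ?_ measurable_const
  refine measurable_pi_iff.2 fun n => ?_
  have h1 : Measurable fun t : ℝ => ⌊t * ((2 : ℕ) : ℝ) ^ (n + 1)⌋₊ :=
    Nat.measurable_floor.comp (measurable_id.mul_const _)
  exact (measurable_from_top (f := fun k : ℕ => decide (Fin.ofNat 2 k = 1))).comp h1

theorem bsec_spec {t : ℝ} (ht : t ∈ Icc (0 : ℝ) 1) : Real.ofDigits (bdig (bsec t)) = t := by
  by_cases h : t < 1
  · have : bdig (bsec t) = Real.digits t 2 := by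
      funext n
      simp only [bdig, bsec, h, if_true]
      generalize Real.digits t 2 n = k
      fin_cases k <;> simp
    rw [this, Real.ofDigits_digits (by norm_num) ⟨ht.1, h⟩]
  · have h1 : t = 1 := le_antisymm ht.2 (not_lt.1 h)
    have : bdig (bsec t) = fun _ => Fin.last 1 := by
      funext n
      simp [bdig, bsec, h]
    rw [this, h1]
    exact Real.ofDigits_const_last_eq_one 1

theorem bphi_irred : IrredMap fun x : ℕ → Bool => Real.ofDigits (bdig x) := by
  refine ⟨continuous_bphi, ?_⟩
  rintro V hV ⟨a, ha⟩
  obtain ⟨n, hn⟩ : ∃ n : ℕ, ∀ x : ℕ → Bool, (∀ i < n, x i = a i) → x ∈ V := by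
    obtain ⟨I, u, hu, huV⟩ := isOpen_pi_iff.1 hV a ha
    refine ⟨I.sup id + 1, fun x hx => huV ?_⟩
    intro i hi
    have : i ≤ I.sup id := Finset.le_sup (f := id) hi
    rw [hx i (by omega)]
    exact (hu i hi).2
  let O : Set ℝ := {t | (pre a n : ℝ) < t * 2 ^ n ∧ t * 2 ^ n < pre a n + 1}
  have hO : IsOpen O :=
    (isOpen_lt (f := fun _ : ℝ => (pre a n : ℝ)) (g := fun t : ℝ => t * 2 ^ n)
      continuous_const (by fun_prop)).inter
    (isOpen_lt (f := fun t : ℝ => t * 2 ^ n) (g := fun _ : ℝ => (pre a n : ℝ) + 1)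
      (by fun_prop) continuous_const)
  have hsub : (fun x : ℕ → Bool => Real.ofDigits (bdig x)) ⁻¹' O ⊆ V := by
    rintro x ⟨h1, h2⟩
    obtain ⟨h3, h4⟩ := bphi_bounds x n
    apply hn
    apply pre_inj
    have e1 : (pre a n : ℝ) < pre x n + 1 := h1.trans_le h4
    have e2 : (pre x n : ℝ) < pre a n + 1 := h3.trans_lt h2
    norm_cast at e1 e2
    omega
  refine ⟨O, hO, ⟨(pre a n + 1 / 2) / 2 ^ n, ?_⟩, ?_, hsub⟩
  · have : (2 : ℝ) ^ n ≠ 0 := by positivity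
    simp only [O, mem_ofPred_eq, div_mul_cancel₀ _ this]
    constructor <;> linarith
  · rintro t ⟨h1, h2⟩
    have hp : (0 : ℝ) < 2 ^ n := by positivity
    have hk : (pre a n : ℝ) + 1 ≤ 2 ^ n := by exact_mod_cast pre_lt a n
    have hk0 : (0 : ℝ) ≤ pre a n := by positivity
    have ht : t ∈ Icc (0 : ℝ) 1 := by
      constructor
      · by_contra hneg
        nlinarith [mul_pos_of_neg_of_neg (not_le.1 hneg) (neg_lt_zero.2 hp)]
      · by_contra hneg
        nlinarith [not_le.1 hneg]
    have hs := bsec_spec ht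
    exact ⟨bsec t, hsub (by simpa only [mem_preimage, hs] using ⟨h1, h2⟩), hs⟩

theorem IrredMap.homeo_comp {X Y Z : Type*} [TopologicalSpace X] [TopologicalSpace Y]
    [TopologicalSpace Z] {f : X → Y} (hf : IrredMap f) (e : Y ≃ₜ Z) : IrredMap (e ∘ f) := by
  refine ⟨e.continuous.comp hf.1, fun V hV hne => ?_⟩
  obtain ⟨O, hO, hOne, hOV, hVO⟩ := hf.2 V hV hne
  refine ⟨e '' O, e.isOpenMap _ hO, hOne.image _, ?_, ?_⟩
  · rw [image_comp]
    exact image_mono hOV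
  · rw [preimage_comp, e.injective.preimage_image]
    exact hVO

theorem exists_param (a b : ℝ) (hab : a < b) :
    ∃ (φ : (ℕ → Bool) → ℝ) (s : ℝ → (ℕ → Bool)), IrredMap φ ∧ range φ ⊆ Icc a b ∧
      Measurable s ∧ ∀ x, φ (s (φ x)) = φ x := by
  have hne : b - a ≠ 0 := by linarith
  let e : ℝ ≃ₜ ℝ := (Homeomorph.mulRight₀ (b - a) hne).trans (Homeomorph.addRight a)
  have he : ∀ t, e t = t * (b - a) + a := fun t => rfl
  refine ⟨e ∘ fun x => Real.ofDigits (bdig x), bsec ∘ e.symm, bphi_irred.homeo_comp e, ?_,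
    bsec_meas.comp e.symm.continuous.measurable, ?_⟩
  · rintro _ ⟨x, rfl⟩
    have h0 := Real.ofDigits_nonneg (bdig x)
    have h1 := Real.ofDigits_le_one (bdig x)
    simp only [Function.comp, he, mem_Icc]
    constructor <;> nlinarith
  · intro x
    simp only [Function.comp, e.symm_apply_apply]
    rw [bsec_spec ⟨Real.ofDigits_nonneg _, Real.ofDigits_le_one _⟩]

theorem meagre_bad {φ : (ℕ → Bool) → ℝ} {s : ℝ → (ℕ → Bool)} (hφ : IrredMap φ)
    (hs : ∀ x, φ (s (φ x)) = φ x) : IsMeagre {x | s (φ x) ≠ x} := by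
  let C : ℕ → Bool → Set (ℕ → Bool) := fun n i => {x | x n = i}
  have hCo : ∀ n i, IsOpen (C n i) := fun n i =>
    (isOpen_discrete {i}).preimage (continuous_apply (A := fun _ : ℕ => Bool) n)
  have hnd : ∀ n, IsNowhereDense (φ '' C n false ∩ φ '' C n true) := by
    intro n
    apply nowhereDense_of_forall
    intro V hV hne
    by_cases h : (φ ⁻¹' V ∩ C n false).Nonempty
    · obtain ⟨O, hO, hOne, hOV, hVO⟩ := hφ.2 _ ((hV.preimage hφ.1).inter (hCo n false)) h
      refine ⟨O, ?_, hO, hOne, ?_⟩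
      · intro y hy
        obtain ⟨x, hx, rfl⟩ := hOV hy
        exact hx.1
      · rw [eq_empty_iff_forall_notMem]
        rintro _ ⟨hy, _, x, hx, rfl⟩
        have h1 : x n = false := (hVO hy).2
        have h2 : x n = true := hx
        simp [h1] at h2
    · refine ⟨V, Subset.rfl, hV, hne, ?_⟩
      rw [eq_empty_iff_forall_notMem]
      rintro _ ⟨hy, ⟨x, hx, rfl⟩, _⟩
      exact h ⟨x, hy, hx⟩
  refine IsMeagre.mono ?_ (isMeagre_iUnion fun n => (hφ.preimage_nd (hnd n)).isMeagre)
  intro x hx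
  obtain ⟨n, hn⟩ := Function.ne_iff.1 hx
  refine mem_iUnion.2 ⟨n, ?_⟩
  cases h : x n
  · refine ⟨⟨x, h, rfl⟩, ⟨s (φ x), ?_, hs x⟩⟩
    simpa [C, h] using hn
  · refine ⟨⟨s (φ x), ?_, hs x⟩, ⟨x, h, rfl⟩⟩
    simpa [C, h] using hn

theorem stmt_4 (hH : HypH) (A : Set (ℝ × ℝ)) (hA : ¬ HasBaireProperty A) :
    ∃ f : ℝ → ℝ, Measurable f ∧ ¬ HasBaireProperty {x : ℝ | (x, f x) ∈ A} := by
  obtain ⟨W, hW, ⟨⟨p, q⟩, hpq⟩, hWA, hWA'⟩ := exists_open_of_not_baire hA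
  obtain ⟨u, v, hu, hv, hpu, hqv, huv⟩ := isOpen_prod_iff.1 hW p q hpq
  obtain ⟨ε, hε, hεu⟩ := Metric.nhds_basis_closedBall.mem_iff.1 (hu.mem_nhds hpu)
  obtain ⟨δ, hδ, hδv⟩ := Metric.nhds_basis_closedBall.mem_iff.1 (hv.mem_nhds hqv)
  rw [Real.closedBall_eq_Icc] at hεu hδv
  obtain ⟨φ, s, hφ, hφr, hs, hsφ⟩ := exists_param (p - ε) (p + ε) (by linarith)
  obtain ⟨ψ, _, hψ, hψr, _, _⟩ := exists_param (q - δ) (q + δ) (by linarith)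
  have hF := hφ.prodMap hψ
  have hr : range (Prod.map φ ψ) ⊆ W := by
    rintro _ ⟨⟨x, y⟩, rfl⟩
    exact huv ⟨hεu (hφr ⟨x, rfl⟩), hδv (hψr ⟨y, rfl⟩)⟩
  obtain ⟨h, hh⟩ := hH (Prod.map φ ψ ⁻¹' A) (hF.nowhereMeager hr hWA)
    (hF.nowhereMeager hr hWA')
  refine ⟨fun t => ψ (h (s t)), ?_, fun hT => hh ?_⟩
  · exact (hψ.1.comp h.continuous).measurable.comp hs
  · refine (hφ.preimage_baire hT).congr_meagre ((meagre_bad hφ hsφ).mono ?_)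
    intro x hx hsx
    simp [mem_symmDiff, hsx] at hx
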